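/- Let μ be a probability measure on ℝ and p* : ℝ → [0,1] a measurable function giving the probability that the initial choice is 0 given α. In the binary AR(1) logit model, define the one-period average marginal effect AME^{(1)} = ∫ (Λ(α+β) − Λ(α)) dμ(α), and let P_{0,1,0} and P_{1,0,1} be the probabilities of the three-period choice histories (0,1,0) and (1,0,1). Then: AME^{(1)} = (e^β − 1) · (P_{0,1,0} + P_{1,0,1}). (Corollary 1.1, equation (36).) -/

import Mathlib

open MeasureTheory

/-- The logistic function `Λ(u) = e^u / (1 + e^u)`. -/
noncomputable def logistic (u : ℝ) : ℝ := Real.exp u / (1 + Real.exp u)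

/-! A logistic probability has odds `e^u`, so raising the index by `β` multiplies the odds by `e^β`;
hence `Λ(α + β) - Λ(α) = (e^β - 1) Λ(α) (1 - Λ(α + β))`. The last product is the probability of one
transition `0 → 1` and one transition `1 → 0`, in either order. The histories `(0,1,0)` and
`(1,0,1)` each consist of exactly these two transitions, so adding their probabilities eliminates
the distribution of the initial state. -/

theorem logistic_eq_sigmoid (u : ℝ) : logistic u = Real.sigmoid u := by
  rw [logistic, Real.sigmoid_def, Real.exp_neg]
  field_simp
  ring

theorem logistic_neg (u : ℝ) : logistic (-u) = 1 - logistic u := by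
  simp only [logistic_eq_sigmoid, Real.sigmoid_neg]

theorem logistic_add_sub_logistic (α β : ℝ) :
    logistic (α + β) - logistic α
      = (Real.exp β - 1) * (logistic α * (1 - logistic (α + β))) := by
  simp only [logistic, Real.exp_add]
  field_simp
  ring

section Integrability

variable {Ω : Type*} [MeasurableSpace Ω] {μ : Measure Ω} {w u : Ω → ℝ}

theorem integrable_mul_logistic (hw : Integrable w μ) (hu : AEMeasurable u μ) :
    Integrable (fun ω => w ω * logistic (u ω)) μ := by
  simp only [logistic_eq_sigmoid]
  have hmeas : AEStronglyMeasurable (fun ω => Real.sigmoid (u ω)) μ :=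
    continuous_sigmoid.comp_aestronglyMeasurable hu.aestronglyMeasurable
  have hbound (ω : Ω) : ‖Real.sigmoid (u ω)‖ ≤ 1 := by
    rw [Real.norm_of_nonneg (Real.sigmoid_nonneg _)]
    exact Real.sigmoid_le_one _
  exact hw.mul_bdd hmeas (ae_of_all _ hbound)

theorem integrable_mul_one_sub_logistic (hw : Integrable w μ) (hu : AEMeasurable u μ) :
    Integrable (fun ω => w ω * (1 - logistic (u ω))) μ := by
  simpa only [Pi.neg_apply, logistic_neg] using integrable_mul_logistic hw hu.neg

end Integrability

theorem cor11_eq36_general {Ω : Type*} [MeasurableSpace Ω] (β : ℝ) (μ : Measure Ω) (α p : Ω → ℝ)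
    (h010 : Integrable (fun ω => p ω * logistic (α ω) * (1 - logistic (α ω + β))) μ)
    (h101 : Integrable (fun ω => (1 - p ω) * (1 - logistic (α ω + β)) * logistic (α ω)) μ) :
    ∫ ω, (logistic (α ω + β) - logistic (α ω)) ∂μ
      = (Real.exp β - 1)
        * (∫ ω, p ω * logistic (α ω) * (1 - logistic (α ω + β)) ∂μ
            + ∫ ω, (1 - p ω) * (1 - logistic (α ω + β)) * logistic (α ω) ∂μ) := by
  rw [← integral_add h010 h101, ← integral_const_mul]
  refine integral_congr_ae (ae_of_all _ fun ω => ?_)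
  simp only [logistic_add_sub_logistic]
  ring

/-- Corollary 1.1, equation (36): in the binary AR(1) logit model, the
one-period average marginal effect `AME⁽¹⁾ = ∫ (Λ(α+β) − Λ(α)) dμ(α)`
satisfies `AME⁽¹⁾ = (e^β − 1) · (P_{0,1,0} + P_{1,0,1})`, where
`P_{0,1,0} = ∫ p*(α) · Λ(α) · (1 − Λ(α+β)) dμ(α)` and
`P_{1,0,1} = ∫ (1 − p*(α)) · (1 − Λ(α+β)) · Λ(α) dμ(α)`. -/
theorem cor11_eq36 (β : ℝ) (μ : Measure ℝ) [IsProbabilityMeasure μ]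
    (pstar : ℝ → ℝ) (hmeas : Measurable pstar)
    (h0 : ∀ α, 0 ≤ pstar α) (h1 : ∀ α, pstar α ≤ 1) :
    (∫ α, (logistic (α + β) - logistic α) ∂μ)
      = (Real.exp β - 1)
        * ((∫ α, pstar α * logistic α * (1 - logistic (α + β)) ∂μ)
            + ∫ α, (1 - pstar α) * (1 - logistic (α + β)) * logistic α ∂μ) := by
  have hp : Integrable pstar μ :=
    .of_mem_Icc 0 1 hmeas.aemeasurable (ae_of_all _ fun α => ⟨h0 α, h1 α⟩)
  exact cor11_eq36_general β μ (fun α => α) pstar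
    (integrable_mul_one_sub_logistic (integrable_mul_logistic hp (by fun_prop)) (by fun_prop))
    (integrable_mul_logistic
      (integrable_mul_one_sub_logistic ((integrable_const 1).sub hp) (by fun_prop)) (by fun_prop))
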